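/- arXiv:2311.03209 — 2 statements merged into one kernel-verified Lean document; each statement's English description precedes it below -/
import Mathlib

section
/- For every N ≥ 0, c > 0 and 0 ≤ b < 3 there exists a constant C = C(N,c,b) such that for every symmetric positive definite real 3×3 matrix G = (g^{ab}), every Z ≥ 1 and every p ∈ ℝ³, one has √(det G) · ∫_{ℝ³} (q⁰)^N h^{−b} exp(−c Z (q⁰ − 1)) dq ≤ C Z^{−3/2 + b/2} (p⁰)^{−b/2}. The constant C is independent of G, Z and p. -/
open Matrix Real MeasureTheory

noncomputable section

/-- 3×3 real matrices. -/
abbrev Mat3 := Matrix (Fin 3) (Fin 3) ℝ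
/-- Momentum vectors in ℝ³. -/
abbrev V3 := Fin 3 → ℝ

/-- The quadratic form `g^{ab} p_a p_b = pᵀ G p`. -/
def quadG (G : Mat3) (p : V3) : ℝ := p ⬝ᵥ G *ᵥ p

/-- The particle energy `p⁰ = √(1 + g^{ab} p_a p_b)`. -/
def p0 (G : Mat3) (p : V3) : ℝ := Real.sqrt (1 + quadG G p)

/-- The relative momentum `h`. -/
def hrel (G : Mat3) (p q : V3) : ℝ :=
  Real.sqrt (-(p0 G p - p0 G q) ^ 2 + quadG G (p - q))

/-!
Everything reduces to `E = ℝᵈ` with its Euclidean norm, since a linear change of variables turns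
`pᵀ G p` into `‖x‖²` and absorbs `√(det G)`. There `h² = 2 (x⁰ y⁰ - 1 - ⟪x, y⟫)`, so Cauchy–Schwarz
gives `h² ≥ ‖x - y‖² / (x⁰ y⁰)`: relative momentum is comparable to distance, at the price of
powers of the energies. Peetre's inequality `(x⁰)² ≤ 2 (y⁰)² (1 + ‖x - y‖²)` trades powers of `x⁰`
for powers of `y⁰`, and those are absorbed by the exponential. After the rescaling `w = √Z y` the
integrand is dominated by `(1 + ‖w‖)⁻ʳ` plus a translate of `‖w‖⁻ᵇ` cut off to the unit ball; the
integral of that majorant is finite because `b < d`, and does not depend on the translation.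
-/

section CutoffKernel

variable {E : Type*} [NormedAddCommGroup E] {b r : ℝ}

/-- The singular kernel `‖x‖ ^ (-b)` cut off to the unit ball. -/
def cutoffKernel (b : ℝ) : E → ℝ :=
  (Metric.ball 0 1).indicator fun x => ‖x‖ ^ (-b)

lemma cutoffKernel_nonneg (b : ℝ) (x : E) : 0 ≤ cutoffKernel b x :=
  Set.indicator_nonneg (fun _ _ => by positivity) x

lemma one_add_inv_sq_norm_rpow_le (hb : 0 ≤ b) {x : E} (hx : x ≠ 0) :
    (1 + (‖x‖ ^ 2)⁻¹) ^ (b / 2) ≤ 2 ^ (b / 2) * (1 + cutoffKernel b x) := by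
  have hx0 : 0 < ‖x‖ := norm_pos_iff.2 hx
  rcases lt_or_ge ‖x‖ 1 with h | h
  · have hinv : 1 ≤ (‖x‖ ^ 2)⁻¹ := (one_le_inv₀ (by positivity)).2 (pow_le_one₀ hx0.le h.le)
    have hpow : (‖x‖ ^ 2)⁻¹ ^ (b / 2) = cutoffKernel b x := by
      rw [cutoffKernel, Set.indicator_of_mem (by simpa using h), inv_rpow (by positivity),
        ← rpow_natCast_mul hx0.le, ← rpow_neg hx0.le]
      congr 2
      push_cast
      ring
    calc (1 + (‖x‖ ^ 2)⁻¹) ^ (b / 2) ≤ (2 * (‖x‖ ^ 2)⁻¹) ^ (b / 2) := by gcongr; linarith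
      _ = 2 ^ (b / 2) * cutoffKernel b x := by
        rw [mul_rpow zero_le_two (by positivity), hpow]
      _ ≤ 2 ^ (b / 2) * (1 + cutoffKernel b x) := by gcongr; linarith
  · have hinv : (‖x‖ ^ 2)⁻¹ ≤ 1 := inv_le_one_of_one_le₀ (one_le_pow₀ h)
    calc (1 + (‖x‖ ^ 2)⁻¹) ^ (b / 2) ≤ 2 ^ (b / 2) := by gcongr; linarith
      _ ≤ 2 ^ (b / 2) * (1 + cutoffKernel b x) :=
        le_mul_of_one_le_right (by positivity) (by linarith [cutoffKernel_nonneg b x])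

lemma one_add_inv_sq_norm_rpow_le_scaled [NormedSpace ℝ E] (hb : 0 ≤ b) {Z : ℝ} (hZ : 1 ≤ Z)
    {x : E} (hx : x ≠ 0) :
    (1 + (‖x‖ ^ 2)⁻¹) ^ (b / 2) ≤ Z ^ (b / 2) * (2 ^ (b / 2) * (1 + cutoffKernel b (√Z • x))) := by
  have hZ0 : 0 < Z := zero_lt_one.trans_le hZ
  have hscale : 1 + (‖x‖ ^ 2)⁻¹ ≤ Z * (1 + (‖√Z • x‖ ^ 2)⁻¹) := by
    rw [norm_smul, norm_of_nonneg (sqrt_nonneg Z), mul_pow, sq_sqrt hZ0.le, mul_add, mul_one,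
      mul_inv, mul_inv_cancel_left₀ hZ0.ne']
    gcongr
  calc (1 + (‖x‖ ^ 2)⁻¹) ^ (b / 2) ≤ (Z * (1 + (‖√Z • x‖ ^ 2)⁻¹)) ^ (b / 2) := by gcongr
    _ = Z ^ (b / 2) * (1 + (‖√Z • x‖ ^ 2)⁻¹) ^ (b / 2) := mul_rpow hZ0.le (by positivity)
    _ ≤ Z ^ (b / 2) * (2 ^ (b / 2) * (1 + cutoffKernel b (√Z • x))) := by
      gcongr
      exact one_add_inv_sq_norm_rpow_le hb (smul_ne_zero (sqrt_ne_zero'.2 hZ0) hx)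

/-- The integrable majorant of the rescaled integrand: a decaying bracket centred at the origin
plus a singular kernel centred at `a`. -/
def bracketAddKernel (r b : ℝ) (a x : E) : ℝ :=
  (1 + ‖x‖) ^ (-r) + cutoffKernel b (x - a)

variable [NormedSpace ℝ E] [FiniteDimensional ℝ E] [Nontrivial E] [MeasurableSpace E]
  [BorelSpace E] (μ : Measure E) [μ.IsAddHaarMeasure]

lemma integrable_cutoffKernel (hb : b < Module.finrank ℝ E) :
    Integrable (cutoffKernel b) μ := by
  refine (integrable_indicator_iff measurableSet_ball).2
    (integrableOn_ball_of_norm_le_rpow (C := 1) Module.finrank_pos hb (.of_forall fun x => ?_)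
      (measurable_norm.pow_const _).aestronglyMeasurable)
  rw [norm_of_nonneg (by positivity), one_mul]

lemma integrable_bracketAddKernel (hr : Module.finrank ℝ E < r)
    (hb : b < Module.finrank ℝ E) (a : E) : Integrable (bracketAddKernel r b a) μ :=
  (integrable_one_add_norm hr).add ((integrable_cutoffKernel μ hb).comp_sub_right a)

lemma integral_bracketAddKernel (hr : Module.finrank ℝ E < r)
    (hb : b < Module.finrank ℝ E) (a : E) :
    ∫ x, bracketAddKernel r b a x ∂μ = ∫ x, (1 + ‖x‖) ^ (-r) ∂μ + ∫ x, cutoffKernel b x ∂μ := by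
  simp only [bracketAddKernel]
  rw [integral_add (integrable_one_add_norm hr) ((integrable_cutoffKernel μ hb).comp_sub_right a),
    integral_sub_right_eq_self (cutoffKernel b) a]

lemma integral_bracketAddKernel_sqrt_smul (hr : Module.finrank ℝ E < r)
    (hb : b < Module.finrank ℝ E) (a : E) {Z : ℝ} (hZ : 0 ≤ Z) :
    ∫ x, bracketAddKernel r b a (√Z • x) ∂μ = Z ^ (-(Module.finrank ℝ E : ℝ) / 2) *
      (∫ x : E, (1 + ‖x‖) ^ (-r) ∂μ + ∫ x : E, cutoffKernel b x ∂μ) := by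
  rw [Measure.integral_comp_smul_of_nonneg μ _ _ (hR := sqrt_nonneg Z),
    integral_bracketAddKernel μ hr hb, smul_eq_mul, ← rpow_natCast, ← rpow_div_two_eq_sqrt _ hZ,
    ← rpow_neg hZ, neg_div]

end CutoffKernel

lemma exists_two_add_pow_le_mul_exp (n : ℕ) {c : ℝ} (hc : 0 < c) :
    ∃ K > (0 : ℝ), ∀ s : ℝ, 0 ≤ s → (2 + s) ^ n ≤ K * exp (c * s) := by
  refine ⟨n.factorial / c ^ n * exp (c * 2), by positivity, fun s hs => ?_⟩
  have h := pow_div_factorial_le_exp (x := c * (2 + s)) (by positivity) n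
  rw [mul_pow, mul_add, exp_add, div_le_iff₀ (by positivity)] at h
  rw [div_mul_eq_mul_div, div_mul_eq_mul_div, le_div_iff₀ (by positivity)]
  linarith

section Energy

variable {E : Type*} [NormedAddCommGroup E]

/-- The energy `x⁰ = √(1 + ‖x‖²)` of a particle of unit mass with momentum `x`. -/
def energy (x : E) : ℝ := √(1 + ‖x‖ ^ 2)

/-- The relative momentum `h` of two particles of unit mass with momenta `x` and `y`. -/
def relMomentum (x y : E) : ℝ := √(-(energy x - energy y) ^ 2 + ‖x - y‖ ^ 2)

lemma energy_sq (x : E) : energy x ^ 2 = 1 + ‖x‖ ^ 2 := sq_sqrt (by positivity)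

lemma one_le_energy (x : E) : 1 ≤ energy x := one_le_sqrt.2 (by simp)

lemma energy_pos (x : E) : 0 < energy x := zero_lt_one.trans_le (one_le_energy x)

lemma relMomentum_nonneg (x y : E) : 0 ≤ relMomentum x y := sqrt_nonneg _

/-- The integrand `(y⁰)ᴺ h⁻ᵇ exp (-a (y⁰ - 1))` to be bounded, used with `a = c Z`. -/
def weightedKernel (N b a : ℝ) (x y : E) : ℝ :=
  energy y ^ N * relMomentum x y ^ (-b) * exp (-(a * (energy y - 1)))

lemma weightedKernel_nonneg (N b a : ℝ) (x y : E) : 0 ≤ weightedKernel N b a x y :=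
  mul_nonneg (mul_nonneg (rpow_nonneg (energy_pos y).le N)
    (rpow_nonneg (relMomentum_nonneg x y) (-b))) (exp_pos _).le

lemma continuous_energy : Continuous (energy : E → ℝ) := by
  unfold energy
  fun_prop

lemma continuous_relMomentum (x : E) : Continuous (relMomentum x) := by
  have := continuous_energy (E := E)
  unfold relMomentum
  fun_prop

lemma measurable_weightedKernel [MeasurableSpace E] [OpensMeasurableSpace E] (N b a : ℝ) (x : E) :
    Measurable (weightedKernel N b a x) := by
  have henergy : Measurable (energy : E → ℝ) := continuous_energy.measurable
  have hrel : Measurable (relMomentum x) := (continuous_relMomentum x).measurable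
  unfold weightedKernel
  fun_prop

lemma peetre_energy_sq_le (x y : E) : energy x ^ 2 ≤ 2 * energy y ^ 2 * (1 + ‖x - y‖ ^ 2) := by
  have htri : ‖x‖ ≤ ‖y‖ + ‖x - y‖ := norm_le_norm_add_norm_sub' x y
  have hsq : ‖x‖ ^ 2 ≤ 2 * (‖y‖ ^ 2 + ‖x - y‖ ^ 2) :=
    (pow_le_pow_left₀ (norm_nonneg x) htri 2).trans add_sq_le
  rw [energy_sq, energy_sq]
  nlinarith [mul_nonneg (sq_nonneg ‖y‖) (sq_nonneg ‖x - y‖)]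

lemma one_add_sqrt_mul_norm_le {Z : ℝ} (hZ : 1 ≤ Z) (x : E) :
    1 + √Z * ‖x‖ ≤ 2 + Z * (energy x - 1) := by
  have hQ := one_le_energy x
  have hle : energy x - 1 ≤ Z * (energy x - 1) := le_mul_of_one_le_left (by linarith) hZ
  suffices √Z * ‖x‖ ≤ 1 + Z * (energy x - 1) by linarith
  refine le_of_sq_le_sq ?_ (by linarith)
  calc (√Z * ‖x‖) ^ 2 = Z * (energy x - 1) * (energy x + 1) := by
        rw [mul_pow, sq_sqrt (by linarith)]
        linear_combination -Z * energy_sq x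
    _ ≤ (1 + Z * (energy x - 1)) ^ 2 := by nlinarith

lemma exists_energy_rpow_mul_exp_le (M r : ℝ) {c : ℝ} (hc : 0 < c) :
    ∃ K > (0 : ℝ), ∀ Z : ℝ, 1 ≤ Z → ∀ x : E,
      energy x ^ M * exp (-(c * Z * (energy x - 1))) ≤ K * (1 + √Z * ‖x‖) ^ (-r) := by
  obtain ⟨m, hm⟩ := exists_nat_ge M
  obtain ⟨n, hn⟩ := exists_nat_ge r
  obtain ⟨K, hK, hexp⟩ := exists_two_add_pow_le_mul_exp (m + n) hc
  refine ⟨K, hK, fun Z hZ x => ?_⟩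
  have hQ := one_le_energy x
  set s := Z * (energy x - 1) with hs
  have hQs : energy x - 1 ≤ s := le_mul_of_one_le_left (by linarith) hZ
  have hpow : energy x ^ M * (1 + √Z * ‖x‖) ^ r ≤ (2 + s) ^ (m + n) := by
    have hx : 1 ≤ 1 + √Z * ‖x‖ := le_add_of_nonneg_right (by positivity)
    calc energy x ^ M * (1 + √Z * ‖x‖) ^ r
        ≤ energy x ^ m * (1 + √Z * ‖x‖) ^ n := by
          rw [← rpow_natCast, ← rpow_natCast]
          gcongr
      _ ≤ (2 + s) ^ m * (2 + s) ^ n :=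
          mul_le_mul (pow_le_pow_left₀ (by linarith) (by linarith) m)
            (pow_le_pow_left₀ (by linarith) (one_add_sqrt_mul_norm_le hZ x) n)
            (by positivity) (pow_nonneg (by linarith) m)
      _ = (2 + s) ^ (m + n) := (pow_add _ _ _).symm
  rw [rpow_neg (by positivity), ← div_eq_mul_inv, le_div_iff₀ (by positivity), mul_assoc c, ← hs,
    Real.exp_neg, mul_right_comm, ← div_eq_mul_inv, div_le_iff₀ (exp_pos _)]
  exact hpow.trans (hexp s (by linarith))

variable [InnerProductSpace ℝ E]

open scoped RealInnerProductSpace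

lemma one_add_inner_le_energy_mul (x y : E) : 1 + ⟪x, y⟫ ≤ energy x * energy y := by
  have hinner : 1 + ⟪x, y⟫ ≤ 1 + ‖x‖ * ‖y‖ := by gcongr; exact real_inner_le_norm x y
  refine hinner.trans (le_of_sq_le_sq ?_ (mul_pos (energy_pos x) (energy_pos y)).le)
  rw [mul_pow, energy_sq, energy_sq]
  nlinarith [sq_nonneg (‖x‖ - ‖y‖)]

lemma relMomentum_sq (x y : E) :
    relMomentum x y ^ 2 = 2 * (energy x * energy y - 1 - ⟪x, y⟫) := by
  have hexpand : -(energy x - energy y) ^ 2 + ‖x - y‖ ^ 2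
      = 2 * (energy x * energy y - 1 - ⟪x, y⟫) := by
    linear_combination norm_sub_sq_real x y - energy_sq x - energy_sq y
  rw [relMomentum, hexpand, sq_sqrt (by linarith [one_add_inner_le_energy_mul x y])]

lemma norm_sub_sq_le_energy_mul_relMomentum_sq (x y : E) :
    ‖x - y‖ ^ 2 ≤ energy x * energy y * relMomentum x y ^ 2 := by
  have hPQ := one_add_inner_le_energy_mul x y
  have hcauchy : ⟪x, y⟫ ^ 2 ≤ ‖x‖ ^ 2 * ‖y‖ ^ 2 := by
    rw [← mul_pow]
    exact sq_le_sq.2 ((abs_real_inner_le_norm x y).trans (le_abs_self _))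
  have hfactor : ‖x - y‖ ^ 2 ≤
      (energy x * energy y - 1 - ⟪x, y⟫) * (energy x * energy y + 1 + ⟪x, y⟫) := by
    have hprod : (energy x * energy y) ^ 2 = (1 + ‖x‖ ^ 2) * (1 + ‖y‖ ^ 2) := by
      rw [mul_pow, energy_sq, energy_sq]
    linear_combination norm_sub_sq_real x y + hcauchy - hprod
  calc ‖x - y‖ ^ 2
      ≤ (energy x * energy y - 1 - ⟪x, y⟫) * (energy x * energy y + 1 + ⟪x, y⟫) := hfactor
    _ ≤ (energy x * energy y - 1 - ⟪x, y⟫) * (energy x * energy y + energy x * energy y) :=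
        mul_le_mul_of_nonneg_left (by linarith) (by linarith)
    _ = energy x * energy y * relMomentum x y ^ 2 := by
        rw [relMomentum_sq]
        ring

lemma relMomentum_pos {x y : E} (hxy : x ≠ y) : 0 < relMomentum x y := by
  refine (relMomentum_nonneg x y).lt_of_ne' fun h0 => ?_
  have hle := norm_sub_sq_le_energy_mul_relMomentum_sq x y
  have hpos : 0 < ‖x - y‖ := norm_sub_pos_iff.2 hxy
  rw [h0] at hle
  nlinarith

lemma relMomentum_sq_inv_le {x y : E} (hxy : x ≠ y) :
    (relMomentum x y ^ 2)⁻¹ ≤ (energy x)⁻¹ * (2 * energy y ^ 3 * (1 + (‖x - y‖ ^ 2)⁻¹)) := by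
  have hP := energy_pos x
  have hQ := energy_pos y
  have hh := relMomentum_pos hxy
  have hd : 0 < ‖x - y‖ := norm_sub_pos_iff.2 hxy
  have hrhs : (energy x)⁻¹ * (2 * energy y ^ 3 * (1 + (‖x - y‖ ^ 2)⁻¹))
      = 2 * energy y ^ 2 * (1 + ‖x - y‖ ^ 2) * energy y / (energy x * ‖x - y‖ ^ 2) := by
    field_simp
    ring
  rw [hrhs, inv_eq_one_div, div_le_div_iff₀ (by positivity) (by positivity), one_mul]
  calc energy x * ‖x - y‖ ^ 2
      ≤ energy x * (energy x * energy y * relMomentum x y ^ 2) := by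
        gcongr
        exact norm_sub_sq_le_energy_mul_relMomentum_sq x y
    _ = energy x ^ 2 * energy y * relMomentum x y ^ 2 := by ring
    _ ≤ 2 * energy y ^ 2 * (1 + ‖x - y‖ ^ 2) * energy y * relMomentum x y ^ 2 := by
        gcongr
        exact peetre_energy_sq_le x y

lemma relMomentum_rpow_neg_le {b : ℝ} (hb : 0 ≤ b) {x y : E} (hxy : x ≠ y) :
    relMomentum x y ^ (-b) ≤ energy x ^ (-(b / 2)) *
      (2 ^ (b / 2) * energy y ^ (3 * (b / 2)) * (1 + (‖x - y‖ ^ 2)⁻¹) ^ (b / 2)) := by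
  have hP := energy_pos x
  have hQ := energy_pos y
  have hh := relMomentum_pos hxy
  calc relMomentum x y ^ (-b) = (relMomentum x y ^ 2)⁻¹ ^ (b / 2) := by
        rw [inv_rpow (by positivity), ← rpow_natCast_mul hh.le, ← rpow_neg hh.le]
        congr 2
        push_cast
        ring
    _ ≤ ((energy x)⁻¹ * (2 * energy y ^ 3 * (1 + (‖x - y‖ ^ 2)⁻¹))) ^ (b / 2) := by
        gcongr
        exact relMomentum_sq_inv_le hxy
    _ = energy x ^ (-(b / 2)) *
          (2 ^ (b / 2) * energy y ^ (3 * (b / 2)) * (1 + (‖x - y‖ ^ 2)⁻¹) ^ (b / 2)) := by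
        rw [mul_rpow (by positivity) (by positivity), mul_rpow (by positivity) (by positivity),
          mul_rpow (by positivity) (by positivity), inv_rpow hP.le, ← rpow_neg hP.le,
          ← rpow_natCast_mul hQ.le, Nat.cast_ofNat]

lemma exists_weightedKernel_le (N : ℝ) {c b r : ℝ} (hc : 0 < c) (hb : 0 ≤ b) (hr : 0 ≤ r) :
    ∃ K > (0 : ℝ), ∀ Z : ℝ, 1 ≤ Z → ∀ x y : E, x ≠ y →
      weightedKernel N b (c * Z) x y ≤
        K * Z ^ (b / 2) * energy x ^ (-(b / 2)) * bracketAddKernel r b (√Z • x) (√Z • y) := by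
  obtain ⟨K, hK, hdecay⟩ := exists_energy_rpow_mul_exp_le (E := E) (N + 3 * (b / 2)) r hc
  refine ⟨2 ^ (b / 2) * 2 ^ (b / 2) * K, by positivity, fun Z hZ x y hxy => ?_⟩
  have hP := energy_pos x
  have hQ := energy_pos y
  have hkernel := one_add_inv_sq_norm_rpow_le_scaled hb hZ (sub_ne_zero.2 hxy.symm)
  rw [norm_sub_rev] at hkernel
  set k := cutoffKernel b (√Z • (y - x)) with hk
  have hk0 : 0 ≤ k := cutoffKernel_nonneg b _
  have hbracket : (1 + √Z * ‖y‖) ^ (-r) ≤ 1 :=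
    rpow_le_one_of_one_le_of_nonpos (le_add_of_nonneg_right (by positivity)) (by linarith)
  have hmajorant : (1 + √Z * ‖y‖) ^ (-r) * (1 + k) ≤ bracketAddKernel r b (√Z • x) (√Z • y) := by
    rw [bracketAddKernel, ← smul_sub, ← hk, norm_smul, norm_of_nonneg (sqrt_nonneg Z), mul_add,
      mul_one]
    gcongr
    exact mul_le_of_le_one_left hk0 hbracket
  calc weightedKernel N b (c * Z) x y
      ≤ energy y ^ N * (energy x ^ (-(b / 2)) * (2 ^ (b / 2) * energy y ^ (3 * (b / 2)) *
          (Z ^ (b / 2) * (2 ^ (b / 2) * (1 + k))))) * exp (-(c * Z * (energy y - 1))) := by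
        rw [weightedKernel]
        gcongr
        refine (relMomentum_rpow_neg_le hb hxy).trans ?_
        gcongr
    _ = 2 ^ (b / 2) * 2 ^ (b / 2) * Z ^ (b / 2) * energy x ^ (-(b / 2)) *
          (energy y ^ (N + 3 * (b / 2)) * exp (-(c * Z * (energy y - 1)))) * (1 + k) := by
        rw [rpow_add hQ]
        ring
    _ ≤ 2 ^ (b / 2) * 2 ^ (b / 2) * Z ^ (b / 2) * energy x ^ (-(b / 2)) *
          (K * (1 + √Z * ‖y‖) ^ (-r)) * (1 + k) := by
        gcongr ?_ * (1 + k)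
        exact mul_le_mul_of_nonneg_left (hdecay Z hZ y) (by positivity)
    _ = 2 ^ (b / 2) * 2 ^ (b / 2) * K * Z ^ (b / 2) * energy x ^ (-(b / 2)) *
          ((1 + √Z * ‖y‖) ^ (-r) * (1 + k)) := by ring
    _ ≤ 2 ^ (b / 2) * 2 ^ (b / 2) * K * Z ^ (b / 2) * energy x ^ (-(b / 2)) *
          bracketAddKernel r b (√Z • x) (√Z • y) := by gcongr

variable [FiniteDimensional ℝ E] [MeasurableSpace E] [BorelSpace E] (μ : Measure E)
  [μ.IsAddHaarMeasure]

lemma exists_integral_weightedKernel_le (N : ℝ) {c b : ℝ} (hc : 0 < c) (hb0 : 0 ≤ b)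
    (hb : b < Module.finrank ℝ E) :
    ∃ C > (0 : ℝ), ∀ Z : ℝ, 1 ≤ Z → ∀ x : E,
      Integrable (weightedKernel N b (c * Z) x) μ ∧
      ∫ y, weightedKernel N b (c * Z) x y ∂μ ≤
        C * Z ^ (-(Module.finrank ℝ E : ℝ) / 2 + b / 2) * energy x ^ (-(b / 2)) := by
  set d := Module.finrank ℝ E
  have : Nontrivial E :=
    Module.nontrivial_of_finrank_pos (R := ℝ) (Nat.cast_pos.1 (hb0.trans_lt hb))
  have hr : (d : ℝ) < d + 1 := lt_add_one _
  obtain ⟨K, hK, hle⟩ := exists_weightedKernel_le (E := E) N (r := d + 1) hc hb0 (by positivity)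
  set I := ∫ x : E, (1 + ‖x‖) ^ (-(d + 1 : ℝ)) ∂μ + ∫ x : E, cutoffKernel b x ∂μ
  have hI : 0 ≤ I :=
    add_nonneg (integral_nonneg fun x => by positivity) (integral_nonneg (cutoffKernel_nonneg b))
  refine ⟨K * (I + 1), by positivity, fun Z hZ x => ?_⟩
  have hZ0 : 0 < Z := zero_lt_one.trans_le hZ
  set B := K * Z ^ (b / 2) * energy x ^ (-(b / 2))
  set m : E → ℝ := fun y => B * bracketAddKernel (d + 1) b (√Z • x) (√Z • y)
  have hm : Integrable m μ :=
    ((integrable_bracketAddKernel μ hr hb _).comp_smul (sqrt_ne_zero'.2 hZ0)).const_mul B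
  have hle_ae : weightedKernel N b (c * Z) x ≤ᵐ[μ] m := by
    filter_upwards [compl_mem_ae_iff.2 (measure_singleton x)] with y hy
    exact hle Z hZ x y (Ne.symm hy)
  have hint : Integrable (weightedKernel N b (c * Z) x) μ := by
    refine hm.mono' (measurable_weightedKernel N b (c * Z) x).aestronglyMeasurable
      (hle_ae.mono fun y hy => ?_)
    rwa [norm_of_nonneg (weightedKernel_nonneg N b (c * Z) x y)]
  refine ⟨hint, ?_⟩
  calc ∫ y, weightedKernel N b (c * Z) x y ∂μ ≤ ∫ y, m y ∂μ := integral_mono_ae hint hm hle_ae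
    _ = B * (Z ^ (-(d : ℝ) / 2) * I) := by
      rw [integral_const_mul, integral_bracketAddKernel_sqrt_smul μ hr hb _ hZ0.le]
    _ = K * I * Z ^ (-(d : ℝ) / 2 + b / 2) * energy x ^ (-(b / 2)) := by
      rw [rpow_add hZ0]
      ring
    _ ≤ K * (I + 1) * Z ^ (-(d : ℝ) / 2 + b / 2) * energy x ^ (-(b / 2)) := by
      have := (energy_pos x).le
      gcongr
      linarith

end Energy

section Metric

variable {ι : Type*} [Fintype ι]

/-- The energy `p⁰ = √(1 + pᵀ G p)` for an inverse metric `G` in any dimension; for `ι = Fin 3` it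
unfolds to `p0`. -/
def metricEnergy (G : Matrix ι ι ℝ) (p : ι → ℝ) : ℝ := √(1 + p ⬝ᵥ G *ᵥ p)

/-- The relative momentum `h` for an inverse metric `G` in any dimension; for `ι = Fin 3` it
unfolds to `hrel`. -/
def metricRelMomentum (G : Matrix ι ι ℝ) (p q : ι → ℝ) : ℝ :=
  √(-(metricEnergy G p - metricEnergy G q) ^ 2 + (p - q) ⬝ᵥ G *ᵥ (p - q))

variable [DecidableEq ι]

open scoped MatrixOrder Matrix.Norms.L2Operator in
lemma exists_transpose_mul_self_of_posDef {G : Matrix ι ι ℝ} (hG : G.PosDef) :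
    ∃ A : Matrix ι ι ℝ, A.det ≠ 0 ∧ G = Aᵀ * A := by
  obtain ⟨A, hA⟩ := CStarAlgebra.nonneg_iff_eq_star_mul_self.mp hG.posSemidef.nonneg
  have hGA : G = Aᵀ * A := by
    rw [hA, star_eq_conjTranspose, conjTranspose_eq_transpose_of_trivial]
  refine ⟨A, fun h => hG.det_pos.ne' ?_, hGA⟩
  rw [hGA, det_mul, h, mul_zero]

lemma measurePreserving_toLin' {A : Matrix ι ι ℝ} (hA : A.det ≠ 0) :
    MeasurePreserving (toLin' A) (ENNReal.ofReal |A.det| • volume) volume := by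
  refine ⟨(toLin' A).continuous_of_finiteDimensional.measurable, ?_⟩
  rw [Measure.map_smul, Real.map_matrix_volume_pi_eq_smul_volume_pi hA, smul_smul,
    ← ENNReal.ofReal_mul (abs_nonneg _), ← abs_mul, mul_inv_cancel₀ hA, abs_one,
    ENNReal.ofReal_one, one_smul]

lemma exists_orthonormal_coordinates {G : Matrix ι ι ℝ} (hG : G.PosDef) :
    ∃ L : (ι → ℝ) ≃L[ℝ] EuclideanSpace ℝ ι, (∀ p, ‖L p‖ ^ 2 = p ⬝ᵥ G *ᵥ p) ∧
      MeasurePreserving L (ENNReal.ofReal √G.det • volume) volume := by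
  obtain ⟨A, hA, rfl⟩ := exists_transpose_mul_self_of_posDef hG
  have hdet : LinearMap.det (toLin' A) ≠ 0 := by rwa [LinearMap.det_toLin']
  refine ⟨(LinearMap.equivOfDetNeZero _ hdet).toContinuousLinearEquiv.trans
    (PiLp.continuousLinearEquiv 2 ℝ fun _ : ι => ℝ).symm, fun p => ?_, ?_⟩
  · rw [EuclideanSpace.real_norm_sq_eq, ← mulVec_mulVec, dotProduct_mulVec, vecMul_transpose]
    simp [dotProduct, sq]
  · rw [det_mul, det_transpose, sqrt_mul_self_eq_abs]
    exact (PiLp.volume_preserving_toLp ι).comp (measurePreserving_toLin' hA)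

end Metric

theorem stmt6_general {ι : Type*} [Fintype ι] [DecidableEq ι] (N : ℝ) {c b : ℝ} (hc : 0 < c)
    (hb0 : 0 ≤ b) (hb : b < Fintype.card ι) :
    ∃ C > (0 : ℝ), ∀ G : Matrix ι ι ℝ, G.PosDef → ∀ Z : ℝ, 1 ≤ Z → ∀ p : ι → ℝ,
      Integrable (fun q => metricEnergy G q ^ N * metricRelMomentum G p q ^ (-b) *
        exp (-(c * Z * (metricEnergy G q - 1)))) ∧
      √G.det * ∫ q, metricEnergy G q ^ N * metricRelMomentum G p q ^ (-b) *
          exp (-(c * Z * (metricEnergy G q - 1)))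
        ≤ C * Z ^ (-(Fintype.card ι : ℝ) / 2 + b / 2) * metricEnergy G p ^ (-(b / 2)) := by
  obtain ⟨C, hC, hbound⟩ := exists_integral_weightedKernel_le
    (volume : Measure (EuclideanSpace ℝ ι)) N hc hb0 (by simpa using hb)
  refine ⟨C, hC, fun G hG Z hZ p => ?_⟩
  obtain ⟨L, hL, hvol⟩ := exists_orthonormal_coordinates hG
  have henergy (q : ι → ℝ) : metricEnergy G q = energy (L q) := by
    rw [metricEnergy, energy, hL]
  have hrel (q : ι → ℝ) : metricRelMomentum G p q = relMomentum (L p) (L q) := by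
    rw [metricRelMomentum, relMomentum, henergy, henergy, ← map_sub, hL]
  have hemb : MeasurableEmbedding L := L.toHomeomorph.measurableEmbedding
  have hdet : 0 < √G.det := sqrt_pos.2 hG.det_pos
  obtain ⟨hint, hle⟩ := hbound Z hZ (L p)
  simp only [henergy, hrel]
  constructor
  · exact (integrable_smul_measure (by simpa using hdet) ENNReal.ofReal_ne_top).1
      ((hvol.integrable_comp_emb hemb).2 hint)
  · rw [← hvol.integral_comp hemb, integral_smul_measure, ENNReal.toReal_ofReal hdet.le,
      finrank_euclideanSpace] at hle
    exact hle

/-- for every `N ≥ 0`, `c > 0` and `0 ≤ b < 3` there is a constant `C`,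
independent of the metric `G`, of `Z ≥ 1` and of `p`, such that
`√(det G) ∫ (q⁰)^N h^{−b} e^{−cZ(q⁰−1)} dq ≤ C Z^{−3/2+b/2} (p⁰)^{−b/2}`.
(Here `√(det G) = (det g)^{−1/2}` where `(g_{ab}) = G⁻¹`.) -/
theorem stmt6 (N c b : ℝ) (hN : 0 ≤ N) (hc : 0 < c) (hb0 : 0 ≤ b) (hb3 : b < 3) :
    ∃ C > (0 : ℝ), ∀ (G : Mat3), G.PosDef → ∀ Z : ℝ, 1 ≤ Z → ∀ p : V3,
      Real.sqrt G.det *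
        ∫ q : V3, p0 G q ^ N * hrel G p q ^ (-b) * Real.exp (-(c * Z * (p0 G q - 1)))
      ≤ C * Z ^ (-(3 : ℝ) / 2 + b / 2) * p0 G p ^ (-(b / 2)) := by
  obtain ⟨C, hC, h⟩ := stmt6_general (ι := Fin 3) N hc hb0 hb3
  exact ⟨C, hC, fun G hG Z hZ p => (h G hG Z hZ p).2⟩
end
end

section
/- Let c₁ ≥ 1, Z > 0, and let G = (g^{ab}) be a symmetric positive definite real 3×3 matrix satisfying (1/c₁)|p|² ≤ Z² g^{ab}p_a p_b ≤ c₁|p|² for all p ∈ ℝ³. Then there is a constant C depending only on c₁ such that: (i) max_{a,b}|g^{ab}| ≤ C Z^{−2}; (ii) Z⁶ det G ≥ 1/C; (iii) there exists a lower-triangular orthonormal frame E for G with max_{i,a}|eⁱ_a| ≤ C Z. If moreover K = (k^{ab}) is a symmetric matrix with max_{a,b}|k^{ab}| ≤ c₁ Z^{−2}, H ≥ γ > 0 and F ≤ η²/4 for some η ∈ [0,1), then (1/C')|p|² ≤ Z² k^{ab}p_a p_b ≤ C'|p|² for all p, where C' depends only on c₁, γ, η. -/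
open Matrix Real

noncomputable section

/-- The quadratic form `k^{ab} p_a p_b`. -/
def quadK (K : Mat3) (p : V3) : ℝ := p ⬝ᵥ K *ᵥ p

/-- Squared Euclidean norm `|p|²`. -/
def enorm2 (p : V3) : ℝ := ∑ i, p i ^ 2

/-- The Hubble scalar `H = (1/3) g_{ab} k^{ab}`. -/
def Hub (G K : Mat3) : ℝ := (1 / 3) * ∑ a, ∑ b, G⁻¹ a b * K a b

/-- The shear `σ^{ab} = k^{ab} − H g^{ab}`. -/
def shearUp (G K : Mat3) : Mat3 := K - Hub G K • G

/-- `σ_{ab} σ^{ab}`. -/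
def shearSq (G K : Mat3) : ℝ :=
  ∑ a, ∑ b, (G⁻¹ * shearUp G K * G⁻¹) a b * shearUp G K a b

/-- The shear variable `F = σ_{ab}σ^{ab}/(4H²)`. -/
def Fvar (G K : Mat3) : ℝ := shearSq G K / (4 * Hub G K ^ 2)

/-!
In an orthonormal frame the squared norm of the shear is a Frobenius norm, so Cauchy-Schwarz gives
`|(k^{ab} - H g^{ab}) p_a p_b| ≤ (σ_{ab} σ^{ab})^{1/2} g^{ab} p_a p_b`. Since `F ≤ η² / 4` says
`σ_{ab} σ^{ab} ≤ (η H)²`, it follows that `k ≥ (1 - η) H g` as quadratic forms, for any number `H`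
in place of the Hubble scalar. For `g` itself, the entries are controlled by polarisation, the
determinant by the eigenvalues, and a frame by its rows being unit vectors of the quadratic form.
-/

section QuadraticForm

variable {ι κ : Type*} [Fintype ι] [Fintype κ] {G : Matrix ι ι ℝ} {m M : ℝ}

theorem two_mul_abs_apply_le_diag_add_diag {α : Type*} {A : Matrix α α ℝ} (hA : A.PosSemidef)
    (a b : α) : 2 * |A a b| ≤ A a a + A b b := by
  have symm : A b a = A a b := hA.isHermitian.apply a b
  have nonneg (s : ℝ) : 0 ≤ A a a + 2 * s * A a b + s ^ 2 * A b b :=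
    calc 0 ≤ ![1, s] ⬝ᵥ A.submatrix ![a, b] ![a, b] *ᵥ ![1, s] :=
          (hA.submatrix ![a, b]).dotProduct_mulVec_nonneg ![1, s]
      _ = A a a + 2 * s * A a b + s ^ 2 * A b b := by
          simp only [dotProduct, mulVec, submatrix_apply, Fin.sum_univ_two, cons_val_zero,
            cons_val_one, symm]
          ring
  rcases abs_cases (A a b) with ⟨habs, -⟩ | ⟨habs, -⟩ <;> linarith [nonneg 1, nonneg (-1)]

theorem apply_self_le_of_dotProduct_mulVec_le
    (hM : ∀ p : ι → ℝ, p ⬝ᵥ G *ᵥ p ≤ M * ∑ i, p i ^ 2) (a : ι) : G a a ≤ M := by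
  classical
  simpa [Pi.single_apply, ite_pow] using hM (Pi.single a 1)

theorem abs_apply_le_of_dotProduct_mulVec_le (hG : G.PosSemidef)
    (hM : ∀ p : ι → ℝ, p ⬝ᵥ G *ᵥ p ≤ M * ∑ i, p i ^ 2) (a b : ι) : |G a b| ≤ M := by
  linarith [two_mul_abs_apply_le_diag_add_diag hG a b,
    apply_self_le_of_dotProduct_mulVec_le hM a, apply_self_le_of_dotProduct_mulVec_le hM b]

theorem le_eigenvalues_of_le_dotProduct_mulVec [DecidableEq ι] (hG : G.IsHermitian)
    (hm : ∀ p : ι → ℝ, m * ∑ i, p i ^ 2 ≤ p ⬝ᵥ G *ᵥ p) (i : ι) : m ≤ hG.eigenvalues i := by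
  have unit : ∑ j, hG.eigenvectorBasis i j ^ 2 = 1 := by
    rw [← EuclideanSpace.real_norm_sq_eq, hG.eigenvectorBasis.norm_eq_one, one_pow]
  simpa [unit, hG.eigenvalues_eq] using hm (hG.eigenvectorBasis i)

theorem pow_card_le_det_of_le_dotProduct_mulVec [DecidableEq ι] (hG : G.IsHermitian)
    (hm₀ : 0 ≤ m) (hm : ∀ p : ι → ℝ, m * ∑ i, p i ^ 2 ≤ p ⬝ᵥ G *ᵥ p) :
    m ^ Fintype.card ι ≤ G.det :=
  calc m ^ Fintype.card ι = ∏ _i : ι, m := by rw [Finset.prod_const, Finset.card_univ]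
    _ ≤ ∏ i, hG.eigenvalues i := Finset.prod_le_prod (fun _ _ => hm₀)
        fun i _ => le_eigenvalues_of_le_dotProduct_mulVec hG hm i
    _ = G.det := hG.det_eq_prod_eigenvalues.symm

theorem sq_dotProduct_mulVec_le_sum_sq (S : Matrix κ ι ℝ) (q : κ → ℝ) (p : ι → ℝ) :
    (q ⬝ᵥ S *ᵥ p) ^ 2 ≤ (∑ i, ∑ j, S i j ^ 2) * ((∑ i, q i ^ 2) * ∑ j, p j ^ 2) := by
  have expand : q ⬝ᵥ S *ᵥ p = ∑ x : κ × ι, S x.1 x.2 * (q x.1 * p x.2) := by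
    simp only [dotProduct, mulVec, Finset.mul_sum, Fintype.sum_prod_type, mul_left_comm]
  calc (q ⬝ᵥ S *ᵥ p) ^ 2
      ≤ (∑ x : κ × ι, S x.1 x.2 ^ 2) * ∑ x : κ × ι, (q x.1 * p x.2) ^ 2 := by
        rw [expand]
        exact Finset.sum_mul_sq_le_sq_mul_sq _ _ _
    _ = _ := by simp only [Fintype.sum_prod_type, mul_pow, Finset.sum_mul_sum]

theorem dotProduct_mulVec_le_of_abs_apply_le {K : Matrix ι ι ℝ} {c : ℝ} (hc : 0 ≤ c)
    (hK : ∀ a b, |K a b| ≤ c) (p : ι → ℝ) :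
    p ⬝ᵥ K *ᵥ p ≤ Fintype.card ι * c * ∑ i, p i ^ 2 := by
  have frobenius : ∑ i, ∑ j, K i j ^ 2 ≤ (Fintype.card ι * c) ^ 2 :=
    calc ∑ i, ∑ j, K i j ^ 2 ≤ ∑ _i : ι, ∑ _j : ι, c ^ 2 := by
          refine Finset.sum_le_sum fun i _ => Finset.sum_le_sum fun j _ => ?_
          exact sq_le_sq.2 ((hK i j).trans (le_abs_self c))
      _ = (Fintype.card ι * c) ^ 2 := by
          simp only [Finset.sum_const, Finset.card_univ, nsmul_eq_mul]
          ring
  refine le_of_abs_le (abs_le_of_sq_le_sq ?_ (by positivity))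
  calc (p ⬝ᵥ K *ᵥ p) ^ 2
      ≤ (∑ i, ∑ j, K i j ^ 2) * ((∑ i, p i ^ 2) * ∑ i, p i ^ 2) :=
        sq_dotProduct_mulVec_le_sum_sq K p p
    _ ≤ (Fintype.card ι * c) ^ 2 * ((∑ i, p i ^ 2) * ∑ i, p i ^ 2) := by gcongr
    _ = (Fintype.card ι * c * ∑ i, p i ^ 2) ^ 2 := by ring

end QuadraticForm

section OrthonormalFrame

variable {ι : Type*} [Fintype ι] {G : Matrix ι ι ℝ}

theorem exists_isLowerTriangular_mul_mul_transpose_eq_one [LinearOrder ι]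
    [LocallyFiniteOrderBot ι] (hG : G.PosDef) :
    ∃ E : Matrix ι ι ℝ, E.IsLowerTriangular ∧ E * G * Eᵀ = 1 := by
  set L := LDL.lowerInv hG
  set d := LDL.diagEntries hG
  have hLDL : diagonal d = L * G * Lᵀ := LDL.diag_eq_lowerInv_conj hG
  have hd : ∀ i, 0 < d i := by
    have hL : IsUnit L := letI := LDL.invertibleLowerInv hG; isUnit_of_invertible L
    rw [← posDef_diagonal_iff, hLDL]
    exact hG.mul_mul_conjTranspose_same (vecMul_injective_of_isUnit hL)
  let D : Matrix ι ι ℝ := diagonal fun i => (√(d i))⁻¹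
  refine ⟨D * L, fun i j hij => ?_, ?_⟩
  · rw [diagonal_mul, show L i j = 0 from LDL.lowerInv_triangular hG hij, mul_zero]
  · calc D * L * G * (D * L)ᵀ = D * (L * G * Lᵀ) * D := by
          rw [transpose_mul, show Dᵀ = D from diagonal_transpose _]
          simp only [Matrix.mul_assoc]
      _ = diagonal fun i => (√(d i))⁻¹ * d i * (√(d i))⁻¹ := by
          rw [← hLDL, diagonal_mul_diagonal, diagonal_mul_diagonal]
      _ = 1 := by
          rw [← diagonal_one]
          congr 1 with i
          rw [mul_right_comm, ← mul_inv, Real.mul_self_sqrt (hd i).le, inv_mul_cancel₀ (hd i).ne']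

theorem mul_sq_apply_le_one_of_mul_mul_transpose_eq_one {κ : Type*} [DecidableEq κ] {m : ℝ}
    (hm₀ : 0 ≤ m) (hm : ∀ p : ι → ℝ, m * ∑ i, p i ^ 2 ≤ p ⬝ᵥ G *ᵥ p) {E : Matrix κ ι ℝ}
    (hE : E * G * Eᵀ = 1) (i : κ) (a : ι) : m * E i a ^ 2 ≤ 1 :=
  calc m * E i a ^ 2 ≤ m * ∑ b, E i b ^ 2 := by
        gcongr
        exact Finset.single_le_sum (f := fun b => E i b ^ 2) (fun _ _ => sq_nonneg _)
          (Finset.mem_univ a)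
    _ ≤ E i ⬝ᵥ G *ᵥ E i := hm (E i)
    _ = (E * G * Eᵀ) i i := dotProduct_mulVec _ _ _
    _ = 1 := by rw [hE, one_apply_eq]

end OrthonormalFrame

section TensorNorm

variable {ι : Type*} [Fintype ι] [DecidableEq ι]

/-- The squared norm `g_{ac} g_{bd} s^{cd} s^{ab}` of a contravariant 2-tensor `S = (s^{ab})`,
where `G = (g^{ab})` is the inverse metric, so that `G⁻¹` lowers indices. For the shear it is
`σ_{ab} σ^{ab}`. -/
def tensorNormSq (G S : Matrix ι ι ℝ) : ℝ :=
  ∑ a, ∑ b, (G⁻¹ * S * G⁻¹) a b * S a b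

theorem tensorNormSq_eq_trace (G S : Matrix ι ι ℝ) :
    tensorNormSq G S = (G⁻¹ * S * G⁻¹ * Sᵀ).trace :=
  sum_hadamard_eq _ _

theorem tensorNormSq_transpose_mul_self {B : Matrix ι ι ℝ} (hB : IsUnit B) (T : Matrix ι ι ℝ) :
    tensorNormSq (Bᵀ * B) (Bᵀ * T * B) = ∑ i, ∑ j, T i j ^ 2 := by
  have hdet : IsUnit B.det := (isUnit_iff_isUnit_det B).1 hB
  have hdetT : IsUnit Bᵀ.det := by rwa [det_transpose]
  calc tensorNormSq (Bᵀ * B) (Bᵀ * T * B) = (B⁻¹ * (T * Tᵀ) * B).trace := by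
        rw [tensorNormSq_eq_trace, Matrix.mul_inv_rev]
        simp only [transpose_mul, transpose_transpose, Matrix.mul_assoc,
          nonsing_inv_mul_cancel_left _ _ hdetT, mul_nonsing_inv_cancel_left _ _ hdet]
    _ = (T * Tᵀ).trace := by
        rw [trace_mul_comm, mul_nonsing_inv_cancel_left _ _ hdet]
    _ = ∑ i, ∑ j, T i j ^ 2 := by
        simp only [← sum_hadamard_eq, hadamard_apply, sq]

theorem sq_dotProduct_mulVec_le_tensorNormSq {G : Matrix ι ι ℝ} (hG : G.PosDef)
    (S : Matrix ι ι ℝ) (p : ι → ℝ) :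
    (p ⬝ᵥ S *ᵥ p) ^ 2 ≤ tensorNormSq G S * (p ⬝ᵥ G *ᵥ p) ^ 2 := by
  obtain ⟨B, hB, rfl⟩ : ∃ B : Matrix ι ι ℝ, IsUnit B ∧ G = Bᵀ * B := by
    open scoped MatrixOrder Matrix.Norms.L2Operator in
    exact CStarAlgebra.isStrictlyPositive_iff_eq_star_mul_self.1 hG.isStrictlyPositive
  obtain ⟨T, rfl⟩ : ∃ T, S = Bᵀ * T * B := by
    have hdet : IsUnit B.det := (isUnit_iff_isUnit_det B).1 hB
    have hdetT : IsUnit Bᵀ.det := by rwa [det_transpose]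
    exact ⟨Bᵀ⁻¹ * S * B⁻¹, by
      simp only [Matrix.mul_assoc, mul_nonsing_inv_cancel_left _ _ hdetT, nonsing_inv_mul _ hdet,
        Matrix.mul_one]⟩
  have pullback (A : Matrix ι ι ℝ) : p ⬝ᵥ (Bᵀ * A * B) *ᵥ p = (B *ᵥ p) ⬝ᵥ A *ᵥ (B *ᵥ p) := by
    rw [← mulVec_mulVec, ← mulVec_mulVec, dotProduct_mulVec, vecMul_transpose]
  have form_eq : p ⬝ᵥ (Bᵀ * B) *ᵥ p = ∑ i, (B *ᵥ p) i ^ 2 := by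
    simpa only [Matrix.mul_one, one_mulVec, dotProduct, ← sq] using pullback 1
  rw [pullback, form_eq, tensorNormSq_transpose_mul_self hB, sq (∑ i, _)]
  exact sq_dotProduct_mulVec_le_sum_sq T _ _

theorem sub_mul_dotProduct_mulVec_le_of_tensorNormSq_le {G K : Matrix ι ι ℝ} {H δ : ℝ}
    (hG : G.PosDef) (hδ : 0 ≤ δ) (hK : tensorNormSq G (K - H • G) ≤ δ ^ 2) (p : ι → ℝ) :
    (H - δ) * (p ⬝ᵥ G *ᵥ p) ≤ p ⬝ᵥ K *ᵥ p := by
  have form_nonneg : 0 ≤ p ⬝ᵥ G *ᵥ p := hG.posSemidef.dotProduct_mulVec_nonneg p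
  have split : p ⬝ᵥ (K - H • G) *ᵥ p = p ⬝ᵥ K *ᵥ p - H * (p ⬝ᵥ G *ᵥ p) := by
    rw [sub_mulVec, smul_mulVec, dotProduct_sub, dotProduct_smul, smul_eq_mul]
  have shear : |p ⬝ᵥ (K - H • G) *ᵥ p| ≤ δ * (p ⬝ᵥ G *ᵥ p) := by
    refine abs_le_of_sq_le_sq ?_ (by positivity)
    rw [mul_pow]
    exact (sq_dotProduct_mulVec_le_tensorNormSq hG _ p).trans (by gcongr)
  rw [split] at shear
  linarith [neg_le_of_abs_le shear]

end TensorNorm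

section Scaling

variable {ι : Type*} [Fintype ι] {G K : Matrix ι ι ℝ} {c Z : ℝ}

theorem abs_apply_le_div_sq_of_sq_mul_le (hZ : 0 < Z) (hG : G.PosSemidef)
    (hb : ∀ p : ι → ℝ, Z ^ 2 * (p ⬝ᵥ G *ᵥ p) ≤ c * ∑ i, p i ^ 2) (a b : ι) :
    |G a b| ≤ c / Z ^ 2 := by
  refine abs_apply_le_of_dotProduct_mulVec_le hG (fun p => ?_) a b
  rw [div_mul_eq_mul_div, le_div_iff₀' (by positivity)]
  exact hb p

theorem one_div_mul_sq_mul_le_of_le_sq_mul (hZ : 0 < Z)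
    (hb : ∀ p : ι → ℝ, 1 / c * ∑ i, p i ^ 2 ≤ Z ^ 2 * (p ⬝ᵥ G *ᵥ p)) (p : ι → ℝ) :
    1 / (c * Z ^ 2) * ∑ i, p i ^ 2 ≤ p ⬝ᵥ G *ᵥ p := by
  rw [← div_div, div_mul_eq_mul_div, div_le_iff₀' (by positivity)]
  exact hb p

theorem one_div_pow_card_le_pow_mul_det [DecidableEq ι] (hc : 0 < c) (hZ : 0 < Z)
    (hG : G.IsHermitian)
    (hb : ∀ p : ι → ℝ, 1 / c * ∑ i, p i ^ 2 ≤ Z ^ 2 * (p ⬝ᵥ G *ᵥ p)) :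
    1 / c ^ Fintype.card ι ≤ Z ^ (2 * Fintype.card ι) * G.det :=
  calc 1 / c ^ Fintype.card ι
      = Z ^ (2 * Fintype.card ι) * (1 / (c * Z ^ 2)) ^ Fintype.card ι := by
        rw [div_pow, mul_pow, one_pow, ← pow_mul]
        field_simp
    _ ≤ Z ^ (2 * Fintype.card ι) * G.det := by
        gcongr
        exact pow_card_le_det_of_le_dotProduct_mulVec hG (by positivity)
          (one_div_mul_sq_mul_le_of_le_sq_mul hZ hb)

theorem exists_isLowerTriangular_frame_abs_apply_le [LinearOrder ι] [LocallyFiniteOrderBot ι]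
    (hc : 1 ≤ c) (hZ : 0 < Z) (hG : G.PosDef)
    (hb : ∀ p : ι → ℝ, 1 / c * ∑ i, p i ^ 2 ≤ Z ^ 2 * (p ⬝ᵥ G *ᵥ p)) :
    ∃ E : Matrix ι ι ℝ, E.IsLowerTriangular ∧ E * G * Eᵀ = 1 ∧ ∀ i a, |E i a| ≤ c * Z := by
  obtain ⟨E, hlower, hE⟩ := exists_isLowerTriangular_mul_mul_transpose_eq_one hG
  refine ⟨E, hlower, hE, fun i a => abs_le_of_sq_le_sq ?_ (by positivity)⟩
  have entry := mul_sq_apply_le_one_of_mul_mul_transpose_eq_one (by positivity)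
    (one_div_mul_sq_mul_le_of_le_sq_mul hZ hb) hE i a
  rw [div_mul_eq_mul_div, one_mul, div_le_one (by positivity)] at entry
  calc E i a ^ 2 ≤ c * Z ^ 2 := entry
    _ ≤ c ^ 2 * Z ^ 2 := by gcongr; exact le_self_pow₀ hc two_ne_zero
    _ = (c * Z) ^ 2 := (mul_pow c Z 2).symm

theorem sq_mul_dotProduct_mulVec_le_of_abs_apply_le (hc : 0 < c) (hZ : 0 < Z)
    (hK : ∀ a b, |K a b| ≤ c / Z ^ 2) (p : ι → ℝ) :
    Z ^ 2 * (p ⬝ᵥ K *ᵥ p) ≤ Fintype.card ι * c * ∑ i, p i ^ 2 :=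
  calc Z ^ 2 * (p ⬝ᵥ K *ᵥ p) ≤ Z ^ 2 * (Fintype.card ι * (c / Z ^ 2) * ∑ i, p i ^ 2) := by
        gcongr
        exact dotProduct_mulVec_le_of_abs_apply_le (by positivity) hK p
    _ = Fintype.card ι * c * ∑ i, p i ^ 2 := by field_simp

theorem le_sq_mul_dotProduct_mulVec_of_shear_le [DecidableEq ι] {γ η H : ℝ}
    (hγ : 0 < γ) (hη₀ : 0 ≤ η) (hη₁ : η < 1) (hG : G.PosDef)
    (hb : ∀ p : ι → ℝ, 1 / c * ∑ i, p i ^ 2 ≤ Z ^ 2 * (p ⬝ᵥ G *ᵥ p))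
    (hH : γ ≤ H) (hF : tensorNormSq G (K - H • G) / (4 * H ^ 2) ≤ η ^ 2 / 4) (p : ι → ℝ) :
    γ * (1 - η) / c * ∑ i, p i ^ 2 ≤ Z ^ 2 * (p ⬝ᵥ K *ᵥ p) := by
  have hH₀ : 0 < H := hγ.trans_le hH
  have hη : 0 < 1 - η := sub_pos.2 hη₁
  have shear : tensorNormSq G (K - H • G) ≤ (η * H) ^ 2 := by
    rw [div_le_iff₀ (by positivity)] at hF
    linarith
  have form_nonneg : 0 ≤ p ⬝ᵥ G *ᵥ p := hG.posSemidef.dotProduct_mulVec_nonneg p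
  calc γ * (1 - η) / c * ∑ i, p i ^ 2 = γ * (1 - η) * (1 / c * ∑ i, p i ^ 2) := by ring
    _ ≤ γ * (1 - η) * (Z ^ 2 * (p ⬝ᵥ G *ᵥ p)) :=
        mul_le_mul_of_nonneg_left (hb p) (by positivity)
    _ ≤ H * (1 - η) * (Z ^ 2 * (p ⬝ᵥ G *ᵥ p)) := by gcongr
    _ = Z ^ 2 * ((H - η * H) * (p ⬝ᵥ G *ᵥ p)) := by ring
    _ ≤ Z ^ 2 * (p ⬝ᵥ K *ᵥ p) := by
        gcongr
        exact sub_mul_dotProduct_mulVec_le_of_tensorNormSq_le hG (by positivity) shear p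

end Scaling

theorem stmt7_general (n : ℕ) (c₁ : ℝ) (hc₁ : 1 ≤ c₁) :
    (∃ C > (0 : ℝ), ∀ Z : ℝ, 0 < Z → ∀ G : Matrix (Fin n) (Fin n) ℝ, G.PosDef →
      (∀ p : Fin n → ℝ, 1 / c₁ * ∑ i, p i ^ 2 ≤ Z ^ 2 * (p ⬝ᵥ G *ᵥ p) ∧
        Z ^ 2 * (p ⬝ᵥ G *ᵥ p) ≤ c₁ * ∑ i, p i ^ 2) →
      (∀ a b, |G a b| ≤ C / Z ^ 2) ∧ 1 / C ≤ Z ^ (2 * n) * G.det ∧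
      ∃ E : Matrix (Fin n) (Fin n) ℝ, (∀ i j, i < j → E i j = 0) ∧ E * G * Eᵀ = 1 ∧
        ∀ i a, |E i a| ≤ C * Z) ∧
    (∀ γ η : ℝ, 0 < γ → 0 ≤ η → η < 1 →
      ∃ C' > (0 : ℝ), ∀ Z : ℝ, 0 < Z → ∀ (G K : Matrix (Fin n) (Fin n) ℝ) (H : ℝ), G.PosDef →
        (∀ p : Fin n → ℝ, 1 / c₁ * ∑ i, p i ^ 2 ≤ Z ^ 2 * (p ⬝ᵥ G *ᵥ p)) →
        (∀ a b, |K a b| ≤ c₁ / Z ^ 2) →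
        γ ≤ H → tensorNormSq G (K - H • G) / (4 * H ^ 2) ≤ η ^ 2 / 4 →
        ∀ p : Fin n → ℝ, 1 / C' * ∑ i, p i ^ 2 ≤ Z ^ 2 * (p ⬝ᵥ K *ᵥ p) ∧
          Z ^ 2 * (p ⬝ᵥ K *ᵥ p) ≤ C' * ∑ i, p i ^ 2) := by
  have hc₀ : 0 < c₁ := zero_lt_one.trans_le hc₁
  refine ⟨⟨c₁ ^ (n + 1), by positivity, fun Z hZ G hG hb => ?_⟩, fun γ η hγ hη₀ hη₁ => ?_⟩
  · have hle : c₁ ≤ c₁ ^ (n + 1) := le_self_pow₀ hc₁ n.succ_ne_zero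
    have entry := abs_apply_le_div_sq_of_sq_mul_le hZ hG.posSemidef fun p => (hb p).2
    have det := one_div_pow_card_le_pow_mul_det hc₀ hZ hG.isHermitian fun p => (hb p).1
    obtain ⟨E, hlower, hE, frame⟩ :=
      exists_isLowerTriangular_frame_abs_apply_le hc₁ hZ hG fun p => (hb p).1
    rw [Fintype.card_fin] at det
    refine ⟨fun a b => (entry a b).trans (by gcongr), le_trans ?_ det, E,
      fun _ _ hij => hlower hij, hE, fun i a => (frame i a).trans (by gcongr)⟩
    gcongr
    exact n.le_succ
  · have : 0 < 1 - η := sub_pos.2 hη₁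
    refine ⟨c₁ / (γ * (1 - η)) + n * c₁, by positivity,
      fun Z hZ G K H hG hb hK hH hF p => ⟨?_, ?_⟩⟩
    · refine le_trans ?_ (le_sq_mul_dotProduct_mulVec_of_shear_le hγ hη₀ hη₁ hG hb hH hF p)
      rw [← one_div_div c₁]
      gcongr
      exact le_add_of_nonneg_right (by positivity)
    · refine (sq_mul_dotProduct_mulVec_le_of_abs_apply_le hc₀ hZ hK p).trans ?_
      rw [Fintype.card_fin]
      gcongr
      exact le_add_of_nonneg_left (by positivity)

/-- if `(1/c₁)|p|² ≤ Z²g^{ab}p_ap_b ≤ c₁|p|²`, then with a constant depending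
only on `c₁`: (i) `max|g^{ab}| ≤ C Z⁻²`; (ii) `Z⁶ det G ≥ 1/C`; (iii) there is a
lower-triangular orthonormal frame `E` (`E G Eᵀ = 1`) with `max|eⁱ_a| ≤ C Z`; and if
moreover `max|k^{ab}| ≤ c₁ Z⁻²`, `H ≥ γ > 0` and `F ≤ η²/4` with `η ∈ [0,1)`, then
`(1/C')|p|² ≤ Z²k^{ab}p_ap_b ≤ C'|p|²` with `C'` depending only on `c₁, γ, η`. -/
theorem stmt7 (c₁ : ℝ) (hc₁ : 1 ≤ c₁) :
    (∃ C > (0 : ℝ), ∀ Z : ℝ, 0 < Z → ∀ G : Mat3, G.PosDef →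
      (∀ p : V3, (1 / c₁) * enorm2 p ≤ Z ^ 2 * quadG G p ∧
        Z ^ 2 * quadG G p ≤ c₁ * enorm2 p) →
      (∀ a b : Fin 3, |G a b| ≤ C / Z ^ 2) ∧
      1 / C ≤ Z ^ 6 * G.det ∧
      (∃ E : Mat3, (∀ i j : Fin 3, i < j → E i j = 0) ∧ E * G * Eᵀ = 1 ∧
        ∀ i a : Fin 3, |E i a| ≤ C * Z)) ∧
    (∀ γ η : ℝ, 0 < γ → 0 ≤ η → η < 1 →
      ∃ C' > (0 : ℝ), ∀ Z : ℝ, 0 < Z → ∀ G K : Mat3, G.PosDef → K.IsSymm →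
        (∀ p : V3, (1 / c₁) * enorm2 p ≤ Z ^ 2 * quadG G p ∧
          Z ^ 2 * quadG G p ≤ c₁ * enorm2 p) →
        (∀ a b : Fin 3, |K a b| ≤ c₁ / Z ^ 2) →
        γ ≤ Hub G K → Fvar G K ≤ η ^ 2 / 4 →
        ∀ p : V3, (1 / C') * enorm2 p ≤ Z ^ 2 * quadK K p ∧
          Z ^ 2 * quadK K p ≤ C' * enorm2 p) :=
  (stmt7_general 3 c₁ hc₁).imp_right fun h γ η hγ hη₀ hη₁ => (h γ η hγ hη₀ hη₁).imp fun _ h =>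
    ⟨h.1, fun Z hZ G K hG _ hb => h.2 Z hZ G K (Hub G K) hG fun p => (hb p).1⟩
end
end
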